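/- arXiv:2110.11721 — 9 statements merged into one kernel-verified Lean document; each statement's English description precedes it below -/
import Mathlib

section
/- Let t0 be a nonnegative integer and let r1, r2, c1, c2 be real numbers with 0 < r1 ≤ 1, r1 ≤ r2 ≤ 2·r1, c1 > 1, c2 ≥ 0, and c1 ≤ (1 + t0)^{r1}. Let ψ : ℕ → ℝ satisfy, for every integer t ≥ 1, ψ(t+1) ≤ (1 − c1/(t + t0)^{r1})·ψ(t) + c2/(t + t0)^{r2}. Then for every integer t ≥ 0, ψ(t+1) ≤ c/(t + t0 + 1)^{r2 − r1}, where c = max{ψ(1)·(t0 + 1)^{r2 − r1}, c2/(c1 − 1)}. -/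
open Real

/-!
The bound `ψ t ≤ c / x ^ s`, with `x = t + t0` and `s = r2 - r1`, propagates from `t` to `t + 1`.
As `1 - c1 / x ^ r1` is nonnegative and `c2 ≤ c * (c1 - 1)`, the recursion turns it into
`ψ (t + 1) ≤ (1 - 1 / x ^ r1) * c / x ^ s`. The factor gained beats the growth of the denominator:
`((x + 1) / x) ^ s ≤ 1 + 1 / x ≤ 1 + 1 / x ^ r1` because `s ≤ 1` and `r1 ≤ 1`, and
`(1 - u) * (1 + u) ≤ 1`.
-/

lemma rpow_div_rpow_le_div {x y s : ℝ} (hx : 0 < x) (hxy : x ≤ y) (hs : s ≤ 1) :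
    y ^ s / x ^ s ≤ y / x := by
  rw [← div_rpow (hx.le.trans hxy) hx.le]
  exact rpow_le_self_of_one_le ((one_le_div hx).2 hxy) hs

lemma one_sub_one_div_rpow_mul_add_one_rpow_le {x r s : ℝ} (hx : 1 ≤ x) (hr0 : 0 ≤ r)
    (hr1 : r ≤ 1) (hs : s ≤ 1) : (1 - 1 / x ^ r) * (x + 1) ^ s ≤ x ^ s := by
  have hx0 : 0 < x := one_pos.trans_le hx
  have factor_nonneg : 0 ≤ 1 - 1 / x ^ r :=
    sub_nonneg.2 (div_le_one_of_le₀ (one_le_rpow hx hr0) (by positivity))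
  have growth : (x + 1) ^ s ≤ (1 + 1 / x ^ r) * x ^ s := by
    rw [← div_le_iff₀ (by positivity)]
    calc (x + 1) ^ s / x ^ s
        ≤ (x + 1) / x := rpow_div_rpow_le_div hx0 (by linarith) hs
      _ = 1 + 1 / x := by rw [add_div, div_self hx0.ne']
      _ ≤ 1 + 1 / x ^ r := by
          gcongr
          exact rpow_le_self_of_one_le hx hr1
  calc (1 - 1 / x ^ r) * (x + 1) ^ s
      ≤ (1 - 1 / x ^ r) * ((1 + 1 / x ^ r) * x ^ s) := by gcongr
    _ = (1 - (1 / x ^ r) ^ 2) * x ^ s := by ring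
    _ ≤ x ^ s := mul_le_of_le_one_left (by positivity) (sub_le_self _ (sq_nonneg _))

lemma contraction_mul_add_le_div_rpow {x r₁ r₂ c₁ c₂ c y : ℝ} (hx : 1 ≤ x) (hr0 : 0 ≤ r₁)
    (hr1 : r₁ ≤ 1) (hr : r₂ ≤ r₁ + 1) (hc : 0 ≤ c) (hc₁ : c₁ ≤ x ^ r₁)
    (hc₂ : c₂ ≤ c * (c₁ - 1)) (hy : y ≤ c / x ^ (r₂ - r₁)) :
    (1 - c₁ / x ^ r₁) * y + c₂ / x ^ r₂ ≤ c / (x + 1) ^ (r₂ - r₁) := by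
  have hx0 : 0 < x := one_pos.trans_le hx
  have factor_nonneg : 0 ≤ 1 - c₁ / x ^ r₁ :=
    sub_nonneg.2 (div_le_one_of_le₀ hc₁ (by positivity))
  have rpow_split : x ^ r₂ = x ^ r₁ * x ^ (r₂ - r₁) := by
    rw [← rpow_add hx0, add_sub_cancel]
  calc (1 - c₁ / x ^ r₁) * y + c₂ / x ^ r₂
      ≤ (1 - c₁ / x ^ r₁) * (c / x ^ (r₂ - r₁)) + c * (c₁ - 1) / x ^ r₂ := by gcongr
    _ = c * ((1 - 1 / x ^ r₁) / x ^ (r₂ - r₁)) := by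
        rw [rpow_split]
        field_simp
        ring
    _ ≤ c * (1 / (x + 1) ^ (r₂ - r₁)) := by
        gcongr c * ?_
        rw [div_le_div_iff₀ (by positivity) (by positivity), one_mul]
        exact one_sub_one_div_rpow_mul_add_one_rpow_le hx hr0 hr1 (by linarith)
    _ = c / (x + 1) ^ (r₂ - r₁) := mul_one_div _ _

theorem sequence_decay_lemma_general {a r₁ r₂ c₁ c₂ c : ℝ} {ψ : ℕ → ℝ} (ha : 0 ≤ a)
    (hr0 : 0 ≤ r₁) (hr1 : r₁ ≤ 1) (hr : r₂ ≤ r₁ + 1) (hc : 0 ≤ c)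
    (hc₁ : c₁ ≤ (1 + a) ^ r₁) (hc₂ : c₂ ≤ c * (c₁ - 1))
    (hrec : ∀ t : ℕ, 1 ≤ t →
      ψ (t + 1) ≤ (1 - c₁ / (t + a) ^ r₁) * ψ t + c₂ / (t + a) ^ r₂)
    (hinit : ψ 1 * (a + 1) ^ (r₂ - r₁) ≤ c) (t : ℕ) :
    ψ (t + 1) ≤ c / (t + a + 1) ^ (r₂ - r₁) := by
  induction t with
  | zero =>
    rw [Nat.cast_zero, zero_add, zero_add]
    exact (le_div_iff₀ (by positivity)).2 hinit
  | succ t ih =>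
    have ht : (1 : ℝ) ≤ (t + 1 : ℕ) := by simp
    have hc₁' : c₁ ≤ ((t + 1 : ℕ) + a) ^ r₁ := hc₁.trans (by gcongr)
    have ih' : ψ (t + 1) ≤ c / ((t + 1 : ℕ) + a) ^ (r₂ - r₁) := by
      rwa [Nat.cast_succ, add_right_comm]
    exact (hrec (t + 1) t.succ_pos).trans <|
      contraction_mul_add_le_div_rpow (by linarith) hr0 hr1 hr hc hc₁' hc₂ ih'

/-- Sequence-decay lemma (Lemma 5 of the paper). -/
theorem sequence_decay_lemma
    (t0 : ℕ) (r1 r2 c1 c2 : ℝ) (ψ : ℕ → ℝ)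
    (hr1pos : 0 < r1) (hr1le : r1 ≤ 1) (hr12 : r1 ≤ r2) (hr2le : r2 ≤ 2 * r1)
    (hc1 : 1 < c1) (hc2 : 0 ≤ c2)
    (hc1le : c1 ≤ (1 + (t0 : ℝ)) ^ r1)
    (hrec : ∀ t : ℕ, 1 ≤ t →
      ψ (t + 1) ≤ (1 - c1 / ((t : ℝ) + (t0 : ℝ)) ^ r1) * ψ t
        + c2 / ((t : ℝ) + (t0 : ℝ)) ^ r2) :
    ∀ t : ℕ,
      ψ (t + 1) ≤
        max (ψ 1 * ((t0 : ℝ) + 1) ^ (r2 - r1)) (c2 / (c1 - 1)) /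
          ((t : ℝ) + (t0 : ℝ) + 1) ^ (r2 - r1) := by
  have hd : 0 < c1 - 1 := sub_pos.2 hc1
  exact sequence_decay_lemma_general t0.cast_nonneg hr1pos.le hr1le (by linarith)
    (le_max_of_le_right (by positivity)) hc1le ((div_le_iff₀ hd).1 (le_max_right _ _)) hrec
    (le_max_left _ _)
end

section
/- For all real numbers x, p, q with x ≥ 1 and 0 ≤ p − q ≤ q ≤ 1, it holds that x^{−(p−q)} − x^{−p} ≤ (x + 1)^{−(p−q)}. -/
open Real

/-!
Put `r = p - q`. The claim is `x ^ (-r)` times `1 - x ^ (-q) ≤ (x / (x + 1)) ^ r`, and `x / (x + 1)`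
separates the two sides: on the left because `x ^ q ≤ x + 1`, on the right because a number
in `[0, 1]` is at most its `r`-th power when `r ≤ 1`.
-/

section

variable {x y q : ℝ}

theorem rpow_le_add_one (hx : 0 ≤ x) (hq₀ : 0 ≤ q) (hq₁ : q ≤ 1) : x ^ q ≤ x + 1 :=
  calc
    x ^ q ≤ (x + 1) ^ q := rpow_le_rpow hx (by linarith) hq₀
    _ ≤ x + 1 := rpow_le_self_of_one_le (by linarith) hq₁

theorem one_sub_rpow_neg_le_div_add_one (hx : 0 < x) (hq₀ : 0 ≤ q) (hq₁ : q ≤ 1) :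
    1 - x ^ (-q) ≤ x / (x + 1) := by
  have inv_le_rpow_neg : (x + 1)⁻¹ ≤ x ^ (-q) := by
    rw [rpow_neg hx.le]
    exact inv_anti₀ (rpow_pos_of_pos hx q) (rpow_le_add_one hx.le hq₀ hq₁)
  calc
    1 - x ^ (-q) ≤ 1 - (x + 1)⁻¹ := sub_le_sub_left inv_le_rpow_neg 1
    _ = x / (x + 1) := by field_simp; ring

theorem rpow_neg_mul_div_rpow (hx : 0 < x) (hy : 0 ≤ y) (r : ℝ) :
    x ^ (-r) * (x / y) ^ r = y ^ (-r) := by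
  have rpow_ne_zero : x ^ r ≠ 0 := (rpow_pos_of_pos hx r).ne'
  rw [div_rpow hx.le hy, rpow_neg hx.le, rpow_neg hy, div_eq_mul_inv,
    inv_mul_cancel_left₀ rpow_ne_zero]

end

theorem rpow_diff_inequality_general {x p q : ℝ} (hx : 0 < x) (hq₀ : 0 ≤ q) (hq₁ : q ≤ 1)
    (hpq : p - q ≤ 1) : x ^ (-(p - q)) - x ^ (-p) ≤ (x + 1) ^ (-(p - q)) := by
  have rpow_neg_eq_mul : x ^ (-p) = x ^ (-(p - q)) * x ^ (-q) := by
    rw [← rpow_add hx]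
    ring_nf
  have div_le_rpow : x / (x + 1) ≤ (x / (x + 1)) ^ (p - q) :=
    self_le_rpow_of_le_one (by positivity) (div_le_one_of_le₀ (by linarith) (by positivity)) hpq
  calc
    x ^ (-(p - q)) - x ^ (-p) = x ^ (-(p - q)) * (1 - x ^ (-q)) := by rw [rpow_neg_eq_mul]; ring
    _ ≤ x ^ (-(p - q)) * (x / (x + 1)) ^ (p - q) := by
      gcongr
      exact (one_sub_rpow_neg_le_div_add_one hx hq₀ hq₁).trans div_le_rpow
    _ = (x + 1) ^ (-(p - q)) := rpow_neg_mul_div_rpow hx (by linarith) (p - q)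

/-- Elementary real-power inequality: for x ≥ 1 and 0 ≤ p − q ≤ q ≤ 1,
`x^{-(p-q)} - x^{-p} ≤ (x+1)^{-(p-q)}`. -/
theorem rpow_diff_inequality (x p q : ℝ) (hx : 1 ≤ x)
    (h0 : 0 ≤ p - q) (h1 : p - q ≤ q) (h2 : q ≤ 1) :
    x ^ (-(p - q)) - x ^ (-p) ≤ (x + 1) ^ (-(p - q)) :=
  rpow_diff_inequality_general (by linarith) (h0.trans h1) h2 (h1.trans h2)
end

section
/- Let (Ω, P) be a probability space and H a real Hilbert space. Let Ψ0, Ψ1 : Ω → H be strongly measurable random vectors with E‖Ψ0‖² < ∞ and E‖Ψ1‖² < ∞, and set m0 = E[Ψ0], m1 = E[Ψ1]. Let y₋ ∈ H and δ ∈ ℝ, and define y(ω) = (1 − δ)(y₋ − Ψ0(ω)) + Ψ1(ω). Then E‖y − m1‖² ≤ (1 − δ)²·‖y₋ − m0‖² + 2(1 − δ)²·E‖Ψ1 − Ψ0‖² + 2δ²·E‖Ψ1 − m1‖². -/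
open MeasureTheory

/-!
A tracking step is affine in the pair `(Ψ0, Ψ1)`, so its mean is the step taken at `(m0, m1)`, which
is off from `m1` by the bias `(1 - δ) • (yprev - m0)`. The mean squared error is therefore the
squared norm of this bias plus the variance of the step. The step deviates from its mean by
`(1 - δ) • (D - 𝔼 D) + δ • (Ψ1 - m1)` with `D = Ψ1 - Ψ0`, and centering `D` does not increase its
second moment.
-/

section SecondMoment

variable {Ω : Type*} [MeasurableSpace Ω] {μ : Measure Ω}

theorem integral_norm_smul_sq {𝕜 E : Type*} [NormedField 𝕜] [NormedAddCommGroup E]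
    [NormedSpace 𝕜 E] (c : 𝕜) (X : Ω → E) :
    ∫ ω, ‖c • X ω‖ ^ 2 ∂μ = ‖c‖ ^ 2 * ∫ ω, ‖X ω‖ ^ 2 ∂μ := by
  simp_rw [norm_smul, mul_pow, integral_const_mul]

theorem integral_norm_add_sq_le {E : Type*} [NormedAddCommGroup E] {X Y : Ω → E}
    (hX : MemLp X 2 μ) (hY : MemLp Y 2 μ) :
    ∫ ω, ‖X ω + Y ω‖ ^ 2 ∂μ ≤ 2 * (∫ ω, ‖X ω‖ ^ 2 ∂μ + ∫ ω, ‖Y ω‖ ^ 2 ∂μ) := by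
  have hX_sq : Integrable (fun ω => ‖X ω‖ ^ 2) μ := hX.integrable_norm_pow two_ne_zero
  have hY_sq : Integrable (fun ω => ‖Y ω‖ ^ 2) μ := hY.integrable_norm_pow two_ne_zero
  rw [← integral_add hX_sq hY_sq, ← integral_const_mul]
  refine integral_mono ((hX.add hY).integrable_norm_pow two_ne_zero)
    ((hX_sq.add hY_sq).const_mul 2) fun ω => ?_
  calc ‖X ω + Y ω‖ ^ 2 ≤ (‖X ω‖ + ‖Y ω‖) ^ 2 := by gcongr; exact norm_add_le _ _
    _ ≤ 2 * (‖X ω‖ ^ 2 + ‖Y ω‖ ^ 2) := add_sq_le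

variable [IsProbabilityMeasure μ] {H : Type*} [NormedAddCommGroup H] [NormedSpace ℝ H]
  [CompleteSpace H]

theorem integral_norm_sub_sq_eq_add_norm_integral_sub_sq (𝕜 : Type*) [RCLike 𝕜]
    [InnerProductSpace 𝕜 H] {X : Ω → H} (hX : MemLp X 2 μ) (a : H) :
    ∫ ω, ‖X ω - a‖ ^ 2 ∂μ =
      ∫ ω, ‖X ω - ∫ ω', X ω' ∂μ‖ ^ 2 ∂μ + ‖(∫ ω, X ω ∂μ) - a‖ ^ 2 := by
  set m := ∫ ω, X ω ∂μ
  have hXm : MemLp (fun ω => X ω - m) 2 μ := hX.sub (memLp_const m)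
  have hXm_int : Integrable (fun ω => X ω - m) μ := hXm.integrable one_le_two
  have hXm_zero : ∫ ω, (X ω - m) ∂μ = 0 := by
    simpa only [average_eq_integral] using integral_sub_average μ X
  have hXm_sq : Integrable (fun ω => ‖X ω - m‖ ^ 2) μ := hXm.integrable_norm_pow two_ne_zero
  have h_inner : Integrable (fun ω => inner 𝕜 (m - a) (X ω - m)) μ := hXm_int.const_inner _
  have h_cross : ∫ ω, RCLike.re (inner 𝕜 (m - a) (X ω - m)) ∂μ = 0 := by
    rw [integral_re h_inner, integral_inner hXm_int, hXm_zero, inner_zero_right, map_zero]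
  have h_expand (ω : Ω) : ‖X ω - a‖ ^ 2 =
      ‖X ω - m‖ ^ 2 + (2 * RCLike.re (inner 𝕜 (m - a) (X ω - m)) + ‖m - a‖ ^ 2) := by
    rw [← sub_add_sub_cancel' m a (X ω), norm_add_sq (𝕜 := 𝕜)]
    ring
  have h_re : Integrable (fun ω => 2 * RCLike.re (inner 𝕜 (m - a) (X ω - m))) μ :=
    h_inner.re.const_mul 2
  simp_rw [h_expand]
  rw [integral_add hXm_sq (by fun_prop), integral_add h_re (integrable_const _),
    integral_const_mul, h_cross, mul_zero, zero_add, integral_const, probReal_univ, one_smul]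

theorem integral_norm_sub_integral_sq_le (𝕜 : Type*) [RCLike 𝕜] [InnerProductSpace 𝕜 H]
    {X : Ω → H} (hX : MemLp X 2 μ) :
    ∫ ω, ‖X ω - ∫ ω', X ω' ∂μ‖ ^ 2 ∂μ ≤ ∫ ω, ‖X ω‖ ^ 2 ∂μ := by
  have h := integral_norm_sub_sq_eq_add_norm_integral_sub_sq 𝕜 hX 0
  simp only [sub_zero] at h
  exact h ▸ le_add_of_nonneg_right (sq_nonneg _)

end SecondMoment

/-- One step of momentum-based (recursive) tracking: the new estimate computed from the previous
estimate `y` and the samples `x₀`, `x₁` of the old and the new quantity, with parameter `δ`. -/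
def momentumStep {R M : Type*} [Ring R] [AddCommGroup M] [Module R M] (δ : R) (y x₀ x₁ : M) : M :=
  (1 - δ) • (y - x₀) + x₁

section Algebra

variable {R M : Type*} [Ring R] [AddCommGroup M] [Module R M]

theorem momentumStep_sub_right (δ : R) (y x₀ x₁ : M) :
    momentumStep δ y x₀ x₁ - x₁ = (1 - δ) • (y - x₀) :=
  add_sub_cancel_right _ _

theorem momentumStep_sub_momentumStep (δ : R) (y x₀ x₁ m₀ m₁ : M) :
    momentumStep δ y x₀ x₁ - momentumStep δ y m₀ m₁ =
      (1 - δ) • (x₁ - x₀ - (m₁ - m₀)) + δ • (x₁ - m₁) := by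
  simp only [momentumStep, sub_smul, smul_sub, one_smul]
  abel

end Algebra

section RandomStep

variable {Ω : Type*} [MeasurableSpace Ω] {P : Measure Ω}

theorem memLp_momentumStep [IsFiniteMeasure P] {𝕜 E : Type*} [NormedField 𝕜]
    [NormedAddCommGroup E] [NormedSpace 𝕜 E] {p : ENNReal} {Ψ₀ Ψ₁ : Ω → E} (hΨ₀ : MemLp Ψ₀ p P)
    (hΨ₁ : MemLp Ψ₁ p P) (δ : 𝕜) (y : E) :
    MemLp (fun ω => momentumStep δ y (Ψ₀ ω) (Ψ₁ ω)) p P :=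
  (((memLp_const y).sub hΨ₀).const_smul (1 - δ)).add hΨ₁

variable [IsProbabilityMeasure P]

theorem integral_momentumStep {𝕜 E : Type*} [NormedField 𝕜] [NormedAddCommGroup E]
    [NormedSpace 𝕜 E] [NormedSpace ℝ E] [SMulCommClass ℝ 𝕜 E] [CompleteSpace E] {Ψ₀ Ψ₁ : Ω → E}
    (hΨ₀ : Integrable Ψ₀ P) (hΨ₁ : Integrable Ψ₁ P) (δ : 𝕜) (y : E) :
    ∫ ω, momentumStep δ y (Ψ₀ ω) (Ψ₁ ω) ∂P =
      momentumStep δ y (∫ ω, Ψ₀ ω ∂P) (∫ ω, Ψ₁ ω ∂P) := by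
  have h_smul : Integrable (fun ω => (1 - δ) • (y - Ψ₀ ω)) P :=
    ((integrable_const y).sub hΨ₀).smul (1 - δ)
  unfold momentumStep
  rw [integral_add h_smul hΨ₁, integral_smul, integral_sub (integrable_const y) hΨ₀,
    integral_const, probReal_univ, one_smul]

variable {𝕜 H : Type*} [RCLike 𝕜] [NormedAddCommGroup H] [InnerProductSpace 𝕜 H]
  [NormedSpace ℝ H] [CompleteSpace H] {Ψ₀ Ψ₁ : Ω → H}

theorem integral_norm_momentumStep_sub_momentumStep_integral_sq_le (hΨ₀ : MemLp Ψ₀ 2 P)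
    (hΨ₁ : MemLp Ψ₁ 2 P) (δ : 𝕜) (y : H) :
    ∫ ω, ‖momentumStep δ y (Ψ₀ ω) (Ψ₁ ω) -
        momentumStep δ y (∫ ω', Ψ₀ ω' ∂P) (∫ ω', Ψ₁ ω' ∂P)‖ ^ 2 ∂P ≤
      2 * ‖1 - δ‖ ^ 2 * ∫ ω, ‖Ψ₁ ω - Ψ₀ ω‖ ^ 2 ∂P +
        2 * ‖δ‖ ^ 2 * ∫ ω, ‖Ψ₁ ω - ∫ ω', Ψ₁ ω' ∂P‖ ^ 2 ∂P := by
  set m₀ := ∫ ω, Ψ₀ ω ∂P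
  set m₁ := ∫ ω, Ψ₁ ω ∂P
  have hD : MemLp (fun ω => Ψ₁ ω - Ψ₀ ω) 2 P := hΨ₁.sub hΨ₀
  have hD_mean : ∫ ω, (Ψ₁ ω - Ψ₀ ω) ∂P = m₁ - m₀ :=
    integral_sub (hΨ₁.integrable one_le_two) (hΨ₀.integrable one_le_two)
  have hD_centered : ∫ ω, ‖Ψ₁ ω - Ψ₀ ω - (m₁ - m₀)‖ ^ 2 ∂P ≤ ∫ ω, ‖Ψ₁ ω - Ψ₀ ω‖ ^ 2 ∂P := by
    simpa only [hD_mean] using integral_norm_sub_integral_sq_le 𝕜 hD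
  simp_rw [momentumStep_sub_momentumStep]
  calc ∫ ω, ‖(1 - δ) • (Ψ₁ ω - Ψ₀ ω - (m₁ - m₀)) + δ • (Ψ₁ ω - m₁)‖ ^ 2 ∂P
    _ ≤ 2 * (∫ ω, ‖(1 - δ) • (Ψ₁ ω - Ψ₀ ω - (m₁ - m₀))‖ ^ 2 ∂P +
          ∫ ω, ‖δ • (Ψ₁ ω - m₁)‖ ^ 2 ∂P) :=
      integral_norm_add_sq_le ((hD.sub (memLp_const _)).const_smul (1 - δ))
        ((hΨ₁.sub (memLp_const _)).const_smul δ)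
    _ = 2 * ‖1 - δ‖ ^ 2 * ∫ ω, ‖Ψ₁ ω - Ψ₀ ω - (m₁ - m₀)‖ ^ 2 ∂P +
          2 * ‖δ‖ ^ 2 * ∫ ω, ‖Ψ₁ ω - m₁‖ ^ 2 ∂P := by
      rw [integral_norm_smul_sq, integral_norm_smul_sq]
      ring
    _ ≤ 2 * ‖1 - δ‖ ^ 2 * ∫ ω, ‖Ψ₁ ω - Ψ₀ ω‖ ^ 2 ∂P +
          2 * ‖δ‖ ^ 2 * ∫ ω, ‖Ψ₁ ω - m₁‖ ^ 2 ∂P := by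
      gcongr

theorem momentum_tracking_error_bound_general (hΨ₀ : MemLp Ψ₀ 2 P) (hΨ₁ : MemLp Ψ₁ 2 P)
    {m₀ m₁ : H} (hm₀ : m₀ = ∫ ω, Ψ₀ ω ∂P) (hm₁ : m₁ = ∫ ω, Ψ₁ ω ∂P) (δ : 𝕜) (y : H) :
    ∫ ω, ‖momentumStep δ y (Ψ₀ ω) (Ψ₁ ω) - m₁‖ ^ 2 ∂P ≤
      ‖1 - δ‖ ^ 2 * ‖y - m₀‖ ^ 2 + 2 * ‖1 - δ‖ ^ 2 * ∫ ω, ‖Ψ₁ ω - Ψ₀ ω‖ ^ 2 ∂P +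
        2 * ‖δ‖ ^ 2 * ∫ ω, ‖Ψ₁ ω - m₁‖ ^ 2 ∂P := by
  have h_mean : ∫ ω, momentumStep δ y (Ψ₀ ω) (Ψ₁ ω) ∂P = momentumStep δ y m₀ m₁ := by
    rw [hm₀, hm₁,
      integral_momentumStep (hΨ₀.integrable one_le_two) (hΨ₁.integrable one_le_two)]
  have h_variance := integral_norm_momentumStep_sub_momentumStep_integral_sq_le hΨ₀ hΨ₁ δ y
  rw [← hm₀, ← hm₁] at h_variance
  rw [integral_norm_sub_sq_eq_add_norm_integral_sub_sq 𝕜 (memLp_momentumStep hΨ₀ hΨ₁ δ y),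
    h_mean, momentumStep_sub_right, norm_smul, mul_pow]
  linarith

end RandomStep

/-- One-step momentum-tracking error bound (Lemma 6 of the paper). -/
theorem momentum_tracking_error_bound
    {Ω : Type*} [MeasurableSpace Ω] (P : Measure Ω) [IsProbabilityMeasure P]
    {H : Type*} [NormedAddCommGroup H] [InnerProductSpace ℝ H] [CompleteSpace H]
    (Ψ0 Ψ1 : Ω → H)
    (hΨ0m : StronglyMeasurable Ψ0) (hΨ1m : StronglyMeasurable Ψ1)
    (hΨ0i : Integrable (fun ω => ‖Ψ0 ω‖ ^ 2) P)
    (hΨ1i : Integrable (fun ω => ‖Ψ1 ω‖ ^ 2) P)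
    (m0 m1 : H) (hm0 : m0 = ∫ ω, Ψ0 ω ∂P) (hm1 : m1 = ∫ ω, Ψ1 ω ∂P)
    (yprev : H) (δ : ℝ) :
    (∫ ω, ‖((1 - δ) • (yprev - Ψ0 ω) + Ψ1 ω) - m1‖ ^ 2 ∂P) ≤
      (1 - δ) ^ 2 * ‖yprev - m0‖ ^ 2 +
        2 * (1 - δ) ^ 2 * (∫ ω, ‖Ψ1 ω - Ψ0 ω‖ ^ 2 ∂P) +
        2 * δ ^ 2 * (∫ ω, ‖Ψ1 ω - m1‖ ^ 2 ∂P) := by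
  simpa only [momentumStep, Real.norm_eq_abs, sq_abs] using momentum_tracking_error_bound_general
    ((memLp_two_iff_integrable_sq_norm hΨ0m.aestronglyMeasurable).2 hΨ0i)
    ((memLp_two_iff_integrable_sq_norm hΨ1m.aestronglyMeasurable).2 hΨ1i) hm0 hm1 δ yprev
end

section
/- Let H be a real Hilbert space, μ > 0, L > 0, and let g : H → ℝ be differentiable, μ-strongly convex, with L-Lipschitz gradient, and let y* ∈ H be its global minimizer. Let (Ω, P) be a probability space and G : Ω → H strongly measurable with E‖G‖² < ∞, E[G] = ∇g(y₋), and E‖G − ∇g(y₋)‖² ≤ σ²·(1 + ‖∇g(y₋)‖²) for a given point y₋ ∈ H and some σ ≥ 0. Let δ > 0 satisfy 2δ(1 + σ²)L² ≤ μ, and define y(ω) = y₋ − δ·G(ω). Then E‖y − y*‖² ≤ (1 − δμ)·‖y₋ − y*‖² + 2δ²σ². -/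
/-!
Write `d = y₋ - y*` and `v = E[G] = ∇g(y₋)`. Expanding the square,
`E‖d - δ G‖² = ‖d‖² - 2δ⟪d, v⟫ + δ² E‖G‖²`. As `∇g(y*) = 0`, strong convexity makes the linear
term at most `-2δμ‖d‖²`, while `E‖G‖² ≤ (1 + σ²)‖v‖² + σ² ≤ (1 + σ²)L²‖d‖² + σ²`; the step-size
condition lets the quadratic term cancel no more than half of the gain `2δμ‖d‖²`.
-/

open MeasureTheory
open scoped RealInnerProductSpace

section Moments

variable {H : Type*} [NormedAddCommGroup H] [InnerProductSpace ℝ H] [CompleteSpace H]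
  {Ω : Type*} [MeasurableSpace Ω] {P : Measure Ω} {G : Ω → H}

lemma integral_norm_sub_smul_sq [IsFiniteMeasure P] (hG : MemLp G 2 P) (a : H) (c : ℝ) :
    (∫ ω, ‖a - c • G ω‖ ^ 2 ∂P) =
      P.real Set.univ * ‖a‖ ^ 2 - 2 * c * ⟪a, ∫ ω, G ω ∂P⟫ + c ^ 2 * ∫ ω, ‖G ω‖ ^ 2 ∂P := by
  have hG1 : Integrable G P := hG.integrable one_le_two
  have hinner : Integrable (fun ω ↦ 2 * c * ⟪a, G ω⟫) P := (hG1.const_inner a).const_mul _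
  have hsub : Integrable (fun ω ↦ ‖a‖ ^ 2 - 2 * c * ⟪a, G ω⟫) P :=
    (integrable_const _).sub hinner
  have hsq : Integrable (fun ω ↦ c ^ 2 * ‖G ω‖ ^ 2) P :=
    (hG.integrable_norm_pow two_ne_zero).const_mul _
  calc ∫ ω, ‖a - c • G ω‖ ^ 2 ∂P
      = ∫ ω, (‖a‖ ^ 2 - 2 * c * ⟪a, G ω⟫ + c ^ 2 * ‖G ω‖ ^ 2) ∂P := by
        congr with ω
        rw [norm_sub_sq_real, inner_smul_right, norm_smul, mul_pow, Real.norm_eq_abs, sq_abs]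
        ring
    _ = _ := by
        rw [integral_add hsub hsq, integral_sub (integrable_const _) hinner, integral_const_mul,
          integral_const_mul, integral_inner hG1, integral_const, smul_eq_mul]

lemma integral_norm_sq_eq_norm_integral_sq_add [IsProbabilityMeasure P] (hG : MemLp G 2 P) :
    (∫ ω, ‖G ω‖ ^ 2 ∂P) =
      ‖∫ ω, G ω ∂P‖ ^ 2 + ∫ ω, ‖G ω - ∫ ω', G ω' ∂P‖ ^ 2 ∂P := by
  have h := integral_norm_sub_smul_sq hG (∫ ω, G ω ∂P) 1
  simp only [one_smul, norm_sub_rev (∫ ω, G ω ∂P), real_inner_self_eq_norm_sq, probReal_univ] at h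
  linarith

end Moments

section Gradient

variable {H : Type*} [NormedAddCommGroup H] [InnerProductSpace ℝ H]

lemma gradient_eq_zero_of_isLocalMin [CompleteSpace H] {g : H → ℝ} {y : H}
    (hy : IsLocalMin g y) : gradient g y = 0 := by
  rw [gradient, hy.fderiv_eq_zero, map_zero]

lemma mul_norm_sub_sq_le_inner_of_strongly_convex {g : H → ℝ} {g' : H → H} {μ : ℝ}
    (hsc : ∀ y z, g y + ⟪g' y, z - y⟫ + (μ / 2) * ‖z - y‖ ^ 2 ≤ g z) (y z : H) :
    μ * ‖y - z‖ ^ 2 ≤ ⟪g' y - g' z, y - z⟫ := by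
  have hyz := hsc y z
  have hzy := hsc z y
  rw [norm_sub_rev z y, ← neg_sub y z, inner_neg_right] at hyz
  rw [inner_sub_left]
  linarith

end Gradient

theorem inner_sgd_contraction_general
    {H : Type*} [NormedAddCommGroup H] [InnerProductSpace ℝ H] [CompleteSpace H]
    {Ω : Type*} [MeasurableSpace Ω] {P : Measure Ω} [IsProbabilityMeasure P]
    {G : Ω → H} (hG : MemLp G 2 P) {v : H} (hmean : (∫ ω, G ω ∂P) = v)
    {μ L : ℝ} {yprev ystar : H}
    (hmono : μ * ‖yprev - ystar‖ ^ 2 ≤ ⟪v, yprev - ystar⟫)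
    (hgrowth : ‖v‖ ≤ L * ‖yprev - ystar‖)
    {σ : ℝ} (hvar : (∫ ω, ‖G ω - v‖ ^ 2 ∂P) ≤ σ ^ 2 * (1 + ‖v‖ ^ 2))
    {δ : ℝ} (hδ : 0 ≤ δ) (hδμ : δ * (1 + σ ^ 2) * L ^ 2 ≤ μ) :
    (∫ ω, ‖(yprev - δ • G ω) - ystar‖ ^ 2 ∂P) ≤
      (1 - δ * μ) * ‖yprev - ystar‖ ^ 2 + δ ^ 2 * σ ^ 2 := by
  set d := yprev - ystar
  have hmoment : (∫ ω, ‖G ω‖ ^ 2 ∂P) ≤ (1 + σ ^ 2) * (L * ‖d‖) ^ 2 + σ ^ 2 := by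
    calc ∫ ω, ‖G ω‖ ^ 2 ∂P
        = ‖v‖ ^ 2 + ∫ ω, ‖G ω - v‖ ^ 2 ∂P := by
          rw [integral_norm_sq_eq_norm_integral_sq_add hG, hmean]
      _ ≤ (1 + σ ^ 2) * ‖v‖ ^ 2 + σ ^ 2 := by linarith
      _ ≤ (1 + σ ^ 2) * (L * ‖d‖) ^ 2 + σ ^ 2 := by gcongr
  calc ∫ ω, ‖(yprev - δ • G ω) - ystar‖ ^ 2 ∂P
      = ‖d‖ ^ 2 - 2 * δ * ⟪v, d⟫ + δ ^ 2 * ∫ ω, ‖G ω‖ ^ 2 ∂P := by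
        simp only [sub_right_comm _ _ ystar]
        rw [integral_norm_sub_smul_sq hG, hmean, probReal_univ, one_mul, real_inner_comm]
    _ ≤ ‖d‖ ^ 2 - 2 * δ * (μ * ‖d‖ ^ 2) +
          δ ^ 2 * ((1 + σ ^ 2) * (L * ‖d‖) ^ 2 + σ ^ 2) := by gcongr
    _ = (1 - 2 * δ * μ + δ * (δ * (1 + σ ^ 2) * L ^ 2)) * ‖d‖ ^ 2 + δ ^ 2 * σ ^ 2 := by ring
    _ ≤ (1 - 2 * δ * μ + δ * μ) * ‖d‖ ^ 2 + δ ^ 2 * σ ^ 2 := by gcongr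
    _ = (1 - δ * μ) * ‖d‖ ^ 2 + δ ^ 2 * σ ^ 2 := by ring

/-- One-step stochastic-gradient contraction for a strongly convex inner problem
(the core of Lemma 1 of the paper). -/
theorem inner_sgd_contraction
    {H : Type*} [NormedAddCommGroup H] [InnerProductSpace ℝ H] [CompleteSpace H]
    (μ L : ℝ) (hμ : 0 < μ) (hL : 0 < L)
    (g : H → ℝ) (hdiff : Differentiable ℝ g)
    (hsc : ∀ y z : H,
      g z ≥ g y + ⟪gradient g y, z - y⟫ + (μ / 2) * ‖z - y‖ ^ 2)
    (hlip : ∀ y z : H, ‖gradient g y - gradient g z‖ ≤ L * ‖y - z‖)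
    (ystar : H) (hystar : ∀ z : H, g ystar ≤ g z)
    {Ω : Type*} [MeasurableSpace Ω] (P : Measure Ω) [IsProbabilityMeasure P]
    (G : Ω → H) (hGm : StronglyMeasurable G)
    (hGi : Integrable (fun ω => ‖G ω‖ ^ 2) P)
    (yprev : H)
    (hmean : (∫ ω, G ω ∂P) = gradient g yprev)
    (σ : ℝ) (hσ : 0 ≤ σ)
    (hvar : (∫ ω, ‖G ω - gradient g yprev‖ ^ 2 ∂P) ≤
      σ ^ 2 * (1 + ‖gradient g yprev‖ ^ 2))
    (δ : ℝ) (hδ : 0 < δ) (hδμ : 2 * δ * (1 + σ ^ 2) * L ^ 2 ≤ μ) :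
    (∫ ω, ‖(yprev - δ • G ω) - ystar‖ ^ 2 ∂P) ≤
      (1 - δ * μ) * ‖yprev - ystar‖ ^ 2 + 2 * δ ^ 2 * σ ^ 2 := by
  have hG : MemLp G 2 P := (memLp_two_iff_integrable_sq_norm hGm.aestronglyMeasurable).2 hGi
  have hgrad : gradient g ystar = 0 := gradient_eq_zero_of_isLocalMin (.of_forall hystar)
  have hmono := mul_norm_sub_sq_le_inner_of_strongly_convex hsc yprev ystar
  have hgrowth := hlip yprev ystar
  rw [hgrad, sub_zero] at hmono hgrowth
  have hδμ' : δ * (1 + σ ^ 2) * L ^ 2 ≤ μ := by linarith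
  have hδσ : 0 ≤ δ ^ 2 * σ ^ 2 := by positivity
  linarith [inner_sgd_contraction_general hG hmean hmono hgrowth hvar hδ.le hδμ']
end

section
/- Let (Ω1, P1) and (Ω2, P2) be probability spaces and let H, H' be real Hilbert spaces. Let A : Ω1 → L(H', H) and b : Ω2 → H' be strongly measurable with E‖A‖² ≤ M_h and E‖b‖² ≤ M_f for constants M_h, M_f ≥ 0, and set m_A = E[A] ∈ L(H', H) and m_b = E[b] ∈ H' (Bochner integrals). Then, with expectation with respect to the product measure P1 ⊗ P2, E‖A(ω1)(b(ω2)) − m_A(m_b)‖² ≤ 4·M_f·M_h. -/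
open MeasureTheory

/-!
For the estimator `X = A b` and `m = m_A m_b`, convexity gives `‖X - m‖ⁿ ≤ 2ⁿ⁻¹ (‖X‖ⁿ + ‖m‖ⁿ)`
pointwise, and both terms have the same bound. Independence factorises `E ‖A‖ⁿ ‖b‖ⁿ`, so
`E ‖X‖ⁿ ≤ E ‖A‖ⁿ E ‖b‖ⁿ`; Jensen's inequality for `A` and for `b` bounds `‖m‖ⁿ` by the same
product. The two terms together give the constant `2ⁿ⁻¹ · 2 = 2ⁿ`, which is `4` for second moments.
-/

section Moments

variable {Ω E : Type*} [MeasurableSpace Ω] {P : Measure Ω} [IsProbabilityMeasure P]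
  [NormedAddCommGroup E] {n : ℕ}

lemma norm_integral_pow_le_integral_norm_pow [NormedSpace ℝ E] (hn : n ≠ 0) {f : Ω → E}
    (hf : MemLp f n P) : ‖∫ ω, f ω ∂P‖ ^ n ≤ ∫ ω, ‖f ω‖ ^ n ∂P := by
  have hf_int : Integrable f P := hf.integrable (mod_cast Nat.one_le_iff_ne_zero.mpr hn)
  calc ‖∫ ω, f ω ∂P‖ ^ n
      ≤ (∫ ω, ‖f ω‖ ∂P) ^ n := by gcongr; exact norm_integral_le_integral_norm f
    _ ≤ ∫ ω, ‖f ω‖ ^ n ∂P :=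
        (convexOn_pow n).map_integral_le (continuous_pow n).continuousOn isClosed_Ici
          (.of_forall fun ω ↦ norm_nonneg (f ω)) hf_int.norm (hf.integrable_norm_pow hn)

lemma norm_sub_pow_le (x y : E) (n : ℕ) : ‖x - y‖ ^ n ≤ 2 ^ (n - 1) * (‖x‖ ^ n + ‖y‖ ^ n) :=
  (pow_le_pow_left₀ (norm_nonneg _) (norm_sub_le x y) n).trans
    (add_pow_le (norm_nonneg x) (norm_nonneg y) n)

lemma integral_norm_sub_const_pow_le {f : Ω → E} (hf : Integrable (fun ω ↦ ‖f ω‖ ^ n) P) (c : E) :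
    ∫ ω, ‖f ω - c‖ ^ n ∂P ≤ 2 ^ (n - 1) * (∫ ω, ‖f ω‖ ^ n ∂P + ‖c‖ ^ n) := by
  calc ∫ ω, ‖f ω - c‖ ^ n ∂P
      ≤ ∫ ω, 2 ^ (n - 1) * (‖f ω‖ ^ n + ‖c‖ ^ n) ∂P :=
        integral_mono_of_nonneg (.of_forall fun ω ↦ by positivity)
          ((hf.add (integrable_const _)).const_mul _)
          (.of_forall fun ω ↦ norm_sub_pow_le (f ω) c n)
    _ = 2 ^ (n - 1) * (∫ ω, ‖f ω‖ ^ n ∂P + ‖c‖ ^ n) := by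
        simp [integral_const_mul, integral_add hf (integrable_const _)]

end Moments

section Apply

variable {𝕜 E F : Type*} [NontriviallyNormedField 𝕜] [NormedAddCommGroup E] [NormedSpace 𝕜 E]
  [NormedAddCommGroup F] [NormedSpace 𝕜 F]

lemma norm_apply_pow_le (T : E →L[𝕜] F) (x : E) (n : ℕ) : ‖T x‖ ^ n ≤ ‖T‖ ^ n * ‖x‖ ^ n :=
  (pow_le_pow_left₀ (norm_nonneg _) (T.le_opNorm x) n).trans_eq (mul_pow _ _ n)

variable {Ω₁ Ω₂ : Type*} [MeasurableSpace Ω₁] [MeasurableSpace Ω₂] {μ : Measure Ω₁}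
  {ν : Measure Ω₂} {A : Ω₁ → E →L[𝕜] F} {b : Ω₂ → E} {n : ℕ}

lemma integrable_norm_apply_prod_pow (hn : n ≠ 0) (hA : MemLp A n μ) (hb : MemLp b n ν) :
    Integrable (fun ω : Ω₁ × Ω₂ ↦ ‖A ω.1 (b ω.2)‖ ^ n) (μ.prod ν) := by
  have hAb : AEStronglyMeasurable (fun ω : Ω₁ × Ω₂ ↦ A ω.1 (b ω.2)) (μ.prod ν) :=
    isBoundedBilinearMap_apply.continuous.comp_aestronglyMeasurable₂ hA.1.comp_fst hb.1.comp_snd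
  refine ((hA.integrable_norm_pow hn).mul_prod (hb.integrable_norm_pow hn)).mono'
    (hAb.norm.pow n) (.of_forall fun ω ↦ ?_)
  simpa using norm_apply_pow_le (A ω.1) (b ω.2) n

lemma integral_norm_apply_prod_pow_le [SFinite μ] [SFinite ν]
    (hA : Integrable (fun ω ↦ ‖A ω‖ ^ n) μ) (hb : Integrable (fun ω ↦ ‖b ω‖ ^ n) ν) :
    ∫ ω, ‖A ω.1 (b ω.2)‖ ^ n ∂(μ.prod ν) ≤ (∫ ω, ‖A ω‖ ^ n ∂μ) * ∫ ω, ‖b ω‖ ^ n ∂ν := by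
  calc ∫ ω, ‖A ω.1 (b ω.2)‖ ^ n ∂(μ.prod ν)
      ≤ ∫ ω, ‖A ω.1‖ ^ n * ‖b ω.2‖ ^ n ∂(μ.prod ν) :=
        integral_mono_of_nonneg (.of_forall fun ω ↦ by positivity) (hA.mul_prod hb)
          (.of_forall fun ω ↦ norm_apply_pow_le (A ω.1) (b ω.2) n)
    _ = (∫ ω, ‖A ω‖ ^ n ∂μ) * ∫ ω, ‖b ω‖ ^ n ∂ν :=
        integral_prod_mul (fun ω ↦ ‖A ω‖ ^ n) (fun ω ↦ ‖b ω‖ ^ n)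

end Apply

theorem compositional_gradient_variance_bound_general
    {Ω₁ Ω₂ : Type*} [MeasurableSpace Ω₁] [MeasurableSpace Ω₂]
    {P₁ : Measure Ω₁} {P₂ : Measure Ω₂} [IsProbabilityMeasure P₁] [IsProbabilityMeasure P₂]
    {E F : Type*} [NormedAddCommGroup E] [NormedSpace ℝ E] [CompleteSpace E]
    [NormedAddCommGroup F] [NormedSpace ℝ F] [CompleteSpace F]
    {A : Ω₁ → E →L[ℝ] F} {b : Ω₂ → E} {n : ℕ} (hn : n ≠ 0)
    (hA : MemLp A n P₁) (hb : MemLp b n P₂) :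
    ∫ ω, ‖A ω.1 (b ω.2) - (∫ ω₁, A ω₁ ∂P₁) (∫ ω₂, b ω₂ ∂P₂)‖ ^ n ∂(P₁.prod P₂) ≤
      2 ^ n * ((∫ ω, ‖A ω‖ ^ n ∂P₁) * ∫ ω, ‖b ω‖ ^ n ∂P₂) := by
  set mA := ∫ ω, A ω ∂P₁
  set mb := ∫ ω, b ω ∂P₂
  set EA := ∫ ω, ‖A ω‖ ^ n ∂P₁
  set Eb := ∫ ω, ‖b ω‖ ^ n ∂P₂
  have h_moment : ∫ ω, ‖A ω.1 (b ω.2)‖ ^ n ∂(P₁.prod P₂) ≤ EA * Eb :=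
    integral_norm_apply_prod_pow_le (hA.integrable_norm_pow hn) (hb.integrable_norm_pow hn)
  have h_mean : ‖mA mb‖ ^ n ≤ EA * Eb :=
    (norm_apply_pow_le mA mb n).trans <| by
      gcongr
      exacts [norm_integral_pow_le_integral_norm_pow hn hA,
        norm_integral_pow_le_integral_norm_pow hn hb]
  calc ∫ ω, ‖A ω.1 (b ω.2) - mA mb‖ ^ n ∂(P₁.prod P₂)
      ≤ 2 ^ (n - 1) * (∫ ω, ‖A ω.1 (b ω.2)‖ ^ n ∂(P₁.prod P₂) + ‖mA mb‖ ^ n) :=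
        integral_norm_sub_const_pow_le (integrable_norm_apply_prod_pow hn hA hb) (mA mb)
    _ ≤ 2 ^ (n - 1) * (EA * Eb + EA * Eb) := by gcongr
    _ = 2 ^ n * (EA * Eb) := by rw [← two_mul, ← mul_assoc, pow_sub_one_mul hn]

/-- Variance bound for the stochastic compositional gradient estimator
(Lemma 7 of the paper): the product of an independent stochastic Jacobian and
stochastic outer gradient has second moment centred at the product of means
bounded by `4 M_f M_h`. -/
theorem compositional_gradient_variance_bound
    {Ω1 Ω2 : Type*} [MeasurableSpace Ω1] [MeasurableSpace Ω2]
    (P1 : Measure Ω1) (P2 : Measure Ω2)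
    [IsProbabilityMeasure P1] [IsProbabilityMeasure P2]
    {H H' : Type*} [NormedAddCommGroup H] [InnerProductSpace ℝ H] [CompleteSpace H]
    [NormedAddCommGroup H'] [InnerProductSpace ℝ H'] [CompleteSpace H']
    (A : Ω1 → (H' →L[ℝ] H)) (b : Ω2 → H')
    (hAm : StronglyMeasurable A) (hbm : StronglyMeasurable b)
    (Mh Mf : ℝ) (hMh : 0 ≤ Mh) (hMf : 0 ≤ Mf)
    (hAi : Integrable (fun ω => ‖A ω‖ ^ 2) P1)
    (hAbd : (∫ ω, ‖A ω‖ ^ 2 ∂P1) ≤ Mh)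
    (hbi : Integrable (fun ω => ‖b ω‖ ^ 2) P2)
    (hbbd : (∫ ω, ‖b ω‖ ^ 2 ∂P2) ≤ Mf)
    (mA : H' →L[ℝ] H) (hmA : mA = ∫ ω, A ω ∂P1)
    (mb : H') (hmb : mb = ∫ ω, b ω ∂P2) :
    (∫ ω, ‖(A ω.1) (b ω.2) - mA mb‖ ^ 2 ∂(P1.prod P2)) ≤ 4 * Mf * Mh := by
  have hA : MemLp A 2 P1 := (memLp_two_iff_integrable_sq_norm hAm.aestronglyMeasurable).mpr hAi
  have hb : MemLp b 2 P2 := (memLp_two_iff_integrable_sq_norm hbm.aestronglyMeasurable).mpr hbi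
  rw [hmA, hmb, show 4 * Mf * Mh = 2 ^ 2 * (Mh * Mf) by ring]
  exact (compositional_gradient_variance_bound_general two_ne_zero hA hb).trans (by gcongr)
end

section
/- Let H be a real Hilbert space and let Q : H → ℝ be differentiable, convex, with L-Lipschitz gradient ∇Q for some L ≥ 0. Let x, x*, s, d ∈ H, D ≥ 0, and η ∈ [0,1] satisfy ‖s − x‖ ≤ D, ‖s − x*‖ ≤ D, and ⟨s, d⟩ ≤ ⟨x*, d⟩. Define x₊ = (1 − η)·x + η·s. Then Q(x₊) − Q(x*) ≤ (1 − η)·(Q(x) − Q(x*)) + η·D·‖∇Q(x) − d‖ + (L/2)·η²·D². -/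
open scoped RealInnerProductSpace

/-! For the derivative `g` of `Q` at `x`, the Lipschitz bound gives the quadratic upper bound
`Q (x + η (s - x)) ≤ Q x + η g (s - x) + (L / 2) η² ‖s - x‖²`, and convexity gives
`g (x* - x) ≤ Q x* - Q x`. The two are linked by
`g (s - x) = (g - d) (s - x*) + (d s - d x*) + g (x* - x)`,
where the first term is at most `D ‖g - d‖` and the second is nonpositive by the choice of `s`.
Only the pairing of `g` and `d` with vectors enters, so both can be taken in the dual of a
normed space. -/

section NormedSpace

open Set AffineMap

variable {E F : Type*} [NormedAddCommGroup E] [NormedSpace ℝ E]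
  [NormedAddCommGroup F] [NormedSpace ℝ F] {C : Set E} {x y : E}

theorem hasDerivWithinAt_comp_lineMap_Icc {f : E → F} {f' : E →L[ℝ] F} {t : ℝ}
    (hC : Convex ℝ C) (hx : x ∈ C) (hy : y ∈ C)
    (hf : HasFDerivWithinAt f f' C (lineMap x y t)) :
    HasDerivWithinAt (fun r : ℝ ↦ f (lineMap x y r)) (f' (y - x)) (Icc 0 1) t :=
  hf.comp_hasDerivWithinAt t hasDerivWithinAt_lineMap fun _ hr ↦ hC.lineMap_mem hx hy hr

theorem norm_image_sub_sub_le_of_lipschitz_hasFDerivWithinAt {f : E → F}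
    {f' : E → E →L[ℝ] F} {L : ℝ} (hC : Convex ℝ C)
    (hf : ∀ u ∈ C, HasFDerivWithinAt f (f' u) C u)
    (hL : ∀ u ∈ C, ‖f' u - f' x‖ ≤ L * ‖u - x‖) (hx : x ∈ C) (hy : y ∈ C) :
    ‖f y - f x - f' x (y - x)‖ ≤ L / 2 * ‖y - x‖ ^ 2 := by
  let remainder : ℝ → F := fun t ↦ f (lineMap x y t) - f x - t • f' x (y - x)
  have hmem : ∀ t ∈ Icc (0 : ℝ) 1, lineMap x y t ∈ C := fun t ht ↦ hC.lineMap_mem hx hy ht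
  have hderiv : ∀ t ∈ Icc (0 : ℝ) 1, HasDerivWithinAt remainder
      ((f' (lineMap x y t) - f' x) (y - x)) (Icc 0 1) t := fun t ht ↦ by
    simpa only [remainder, id_eq, sub_apply, one_smul] using
      ((hasDerivWithinAt_comp_lineMap_Icc hC hx hy (hf _ (hmem t ht))).sub_const (f x)).fun_sub
        ((hasDerivWithinAt_id t _).smul_const (f' x (y - x)))
  have hbound : ∀ t ∈ Ico (0 : ℝ) 1,
      ‖(f' (lineMap x y t) - f' x) (y - x)‖ ≤ L * ‖y - x‖ ^ 2 * t := fun t ht ↦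
    calc
      _ ≤ ‖f' (lineMap x y t) - f' x‖ * ‖y - x‖ := ContinuousLinearMap.le_opNorm _ _
      _ ≤ L * ‖lineMap x y t - x‖ * ‖y - x‖ := by
        gcongr
        exact hL _ (hmem t (Ico_subset_Icc_self ht))
      _ = L * ‖y - x‖ ^ 2 * t := by
        rw [← vsub_eq_sub, lineMap_vsub_left, vsub_eq_sub, norm_smul, Real.norm_of_nonneg ht.1]
        ring
  have hparabola : ∀ t : ℝ, HasDerivAt (fun r ↦ L / 2 * ‖y - x‖ ^ 2 * r ^ 2)
      (L * ‖y - x‖ ^ 2 * t) t := fun t ↦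
    ((hasDerivAt_pow 2 t).const_mul _).congr_deriv (by push_cast; ring)
  simpa [remainder] using image_norm_le_of_norm_deriv_right_le_deriv_boundary
    (fun t ht ↦ (hderiv t ht).continuousWithinAt)
    (fun t ht ↦ (hderiv t (Ico_subset_Icc_self ht)).mono_of_mem_nhdsWithin
      (Icc_mem_nhdsGE_of_mem ht))
    (by simp [remainder]) hparabola hbound (right_mem_Icc.2 zero_le_one)

theorem apply_sub_le_image_sub_of_convexOn {f : E → ℝ} {f' : E →L[ℝ] ℝ}
    (hconv : ConvexOn ℝ C f) (hf : HasFDerivWithinAt f f' C x) (hx : x ∈ C) (hy : y ∈ C) :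
    f' (y - x) ≤ f y - f x := by
  have hline : ConvexOn ℝ (Icc 0 1) (fun t : ℝ ↦ f (lineMap x y t)) :=
    (hconv.comp_affineMap (lineMap x y)).subset
      (fun _ ht ↦ hconv.1.lineMap_mem hx hy ht) (convex_Icc 0 1)
  have hderiv : HasDerivWithinAt (fun t : ℝ ↦ f (lineMap x y t)) (f' (y - x)) (Icc 0 1) 0 :=
    hasDerivWithinAt_comp_lineMap_Icc hconv.1 hx hy (by simpa using hf)
  simpa [slope_def_field] using hline.le_slope_of_hasDerivWithinAt
    (left_mem_Icc.2 zero_le_one) (right_mem_Icc.2 zero_le_one) zero_lt_one hderiv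

theorem apply_sub_le_opNorm_sub_mul_add {g d : E →L[ℝ] ℝ} {s z : E} (hd : d s ≤ d z) :
    g (s - x) ≤ ‖g - d‖ * ‖s - z‖ + g (z - x) :=
  calc
    g (s - x) = (g - d) (s - z) + (d s - d z) + g (z - x) := by
      simp only [sub_apply, map_sub]
      ring
    _ ≤ ‖g - d‖ * ‖s - z‖ + 0 + g (z - x) := by
      gcongr
      · exact (le_abs_self _).trans ((g - d).le_opNorm _)
      · exact sub_nonpos.2 hd
    _ = _ := by rw [add_zero]

theorem frank_wolfe_step_convex_general {Q : E → ℝ} {Q' : E → E →L[ℝ] ℝ} {L D η : ℝ}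
    {xstar s : E} {d : E →L[ℝ] ℝ} (hL : 0 ≤ L) (hconv : ConvexOn ℝ C Q)
    (hderiv : ∀ u ∈ C, HasFDerivWithinAt Q (Q' u) C u)
    (hlip : ∀ u ∈ C, ‖Q' u - Q' x‖ ≤ L * ‖u - x‖)
    (hx : x ∈ C) (hxstar : xstar ∈ C) (hη : 0 ≤ η) (hstep : (1 - η) • x + η • s ∈ C)
    (hsx : ‖s - x‖ ≤ D) (hsxstar : ‖s - xstar‖ ≤ D) (hlin : d s ≤ d xstar) :
    Q ((1 - η) • x + η • s) - Q xstar ≤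
      (1 - η) * (Q x - Q xstar) + η * D * ‖Q' x - d‖ + (L / 2) * η ^ 2 * D ^ 2 := by
  have hdisp : (1 - η) • x + η • s - x = η • (s - x) := by module
  have hdescent : Q ((1 - η) • x + η • s) - Q x - η * Q' x (s - x) ≤
      L / 2 * (η * ‖s - x‖) ^ 2 := by
    simpa only [hdisp, map_smul, smul_eq_mul, norm_smul, Real.norm_of_nonneg hη] using
      (le_abs_self _).trans
        (norm_image_sub_sub_le_of_lipschitz_hasFDerivWithinAt hconv.1 hderiv hlip hx hstep)
  have hslope : Q' x (s - x) ≤ ‖Q' x - d‖ * D + (Q xstar - Q x) :=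
    calc
      _ ≤ ‖Q' x - d‖ * ‖s - xstar‖ + Q' x (xstar - x) := apply_sub_le_opNorm_sub_mul_add hlin
      _ ≤ _ := by
        gcongr
        exact apply_sub_le_image_sub_of_convexOn hconv (hderiv x hx) hx hxstar
  calc
    _ ≤ Q x + η * Q' x (s - x) + L / 2 * (η * ‖s - x‖) ^ 2 - Q xstar := by linarith
    _ ≤ Q x + η * (‖Q' x - d‖ * D + (Q xstar - Q x)) + L / 2 * (η * D) ^ 2 - Q xstar := by gcongr
    _ = _ := by ring

end NormedSpace

/-- Per-iteration inequality for the Frank–Wolfe update with an inexact gradient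
direction, convex case (deterministic core of Theorems 1 and 2 of the paper). -/
theorem frank_wolfe_step_convex
    {H : Type*} [NormedAddCommGroup H] [InnerProductSpace ℝ H] [CompleteSpace H]
    (Q : H → ℝ) (L : ℝ) (hL : 0 ≤ L)
    (hdiff : Differentiable ℝ Q)
    (hconv : ConvexOn ℝ Set.univ Q)
    (hlip : ∀ u v : H, ‖gradient Q u - gradient Q v‖ ≤ L * ‖u - v‖)
    (x xstar s d : H) (D η : ℝ) (hD : 0 ≤ D) (hη0 : 0 ≤ η) (hη1 : η ≤ 1)
    (hsx : ‖s - x‖ ≤ D) (hsxstar : ‖s - xstar‖ ≤ D)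
    (hlin : ⟪s, d⟫ ≤ ⟪xstar, d⟫) :
    Q ((1 - η) • x + η • s) - Q xstar ≤
      (1 - η) * (Q x - Q xstar) + η * D * ‖gradient Q x - d‖
        + (L / 2) * η ^ 2 * D ^ 2 := by
  simpa only [← map_sub, LinearIsometryEquiv.norm_map] using
    frank_wolfe_step_convex_general (Q' := fun u ↦ InnerProductSpace.toDual ℝ H (gradient Q u))
      (d := InnerProductSpace.toDual ℝ H d) hL hconv
      (fun u _ ↦ (hdiff u).hasGradientAt.hasFDerivAt.hasFDerivWithinAt)
      (fun u _ ↦ by simpa only [← map_sub, LinearIsometryEquiv.norm_map] using hlip u x)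
      (Set.mem_univ x) (Set.mem_univ xstar) hη0 (Set.mem_univ _) hsx hsxstar
      (by simpa only [InnerProductSpace.toDual_apply_apply, real_inner_comm] using hlin)
end

section
/- Let H be a real Hilbert space and let Q : H → ℝ be differentiable with L-Lipschitz gradient ∇Q for some L ≥ 0. Let x, s, v̂, d ∈ H, D ≥ 0, and η ∈ [0,1] satisfy ‖s − x‖ ≤ D, ‖v̂ − x‖ ≤ D, and ⟨s, d⟩ ≤ ⟨v̂, d⟩. Define the Frank–Wolfe gap value G = ⟨v̂ − x, −∇Q(x)⟩ and x₊ = (1 − η)·x + η·s. Then Q(x₊) ≤ Q(x) − η·G + 2·η·D·‖d − ∇Q(x)‖ + (L/2)·η²·D². -/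
open scoped RealInnerProductSpace

/-!
Integrating the Lipschitz bound on the derivative along the segment from `x` to `x + η (s - x)`
bounds `Q` by its first-order model at `x` plus `(L / 2) η² ‖s - x‖²`. The linear term is compared
with the gap through
`Q'(x) s = Q'(x) v + (d s - d v) - (d - Q'(x)) (s - v)`,
where `d s ≤ d v` by the choice of `s`, and the last summand costs at most
`‖d - Q'(x)‖ ‖s - v‖ ≤ 2 D ‖d - Q'(x)‖`. Only the duality pairing enters, so the argument takes
place in a normed space, with the gradient and the direction `d` read as continuous linear forms.
-/

lemma le_quadratic_of_deriv_right_le_affine {g g' : ℝ → ℝ} {a b m c : ℝ} (hab : a ≤ b)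
    (hg : ContinuousOn g (Set.Icc a b))
    (hg' : ∀ t ∈ Set.Ico a b, HasDerivWithinAt g (g' t) (Set.Ici t) t)
    (bound : ∀ t ∈ Set.Ico a b, g' t ≤ m + c * (t - a)) :
    g b ≤ g a + m * (b - a) + c / 2 * (b - a) ^ 2 := by
  have hmodel : ∀ t, HasDerivAt (fun t ↦ g a + m * (t - a) + c / 2 * (t - a) ^ 2)
      (m + c * (t - a)) t := fun t ↦ by
    have hsub : HasDerivAt (fun t ↦ t - a) 1 t := (hasDerivAt_id t).sub_const a
    exact (((hsub.const_mul m).const_add (g a)).add ((hsub.pow 2).const_mul (c / 2))).congr_deriv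
      (by push_cast; ring)
  exact image_le_of_deriv_right_le_deriv_boundary hg hg' (by simp)
    (fun t _ ↦ (hmodel t).continuousAt.continuousWithinAt)
    (fun t _ ↦ (hmodel t).hasDerivWithinAt) bound (Set.right_mem_Icc.2 hab)

lemma apply_le_apply_add_norm_sub_mul_norm_sub {V : Type*} [SeminormedAddCommGroup V]
    [NormedSpace ℝ V] {φ d : StrongDual ℝ V} {s v : V} (hlin : d s ≤ d v) :
    φ s ≤ φ v + ‖d - φ‖ * ‖s - v‖ := by
  have herror : -((d - φ) (s - v)) ≤ ‖d - φ‖ * ‖s - v‖ :=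
    (neg_le_abs _).trans ((d - φ).le_opNorm (s - v))
  simp only [sub_apply, map_sub] at herror
  linarith

section NormedSpace

variable {E : Type*} [NormedAddCommGroup E] [NormedSpace ℝ E]

lemma le_add_fderiv_add_sq_of_norm_fderiv_sub_le {f : E → ℝ} {f' : E → StrongDual ℝ E}
    {x y : E} {L : ℝ}
    (hf : ∀ z ∈ segment ℝ x y, HasFDerivWithinAt f (f' z) (segment ℝ x y) z)
    (hlip : ∀ z ∈ segment ℝ x y, ‖f' z - f' x‖ ≤ L * ‖z - x‖) :
    f y ≤ f x + f' x (y - x) + L / 2 * ‖y - x‖ ^ 2 := by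
  let γ : ℝ → E := AffineMap.lineMap x y
  have hγ : Set.MapsTo γ (Set.Icc 0 1) (segment ℝ x y) := fun t ht ↦
    segment_eq_image_lineMap ℝ x y ▸ Set.mem_image_of_mem γ ht
  have hderiv : ∀ t ∈ Set.Icc (0 : ℝ) 1,
      HasDerivWithinAt (f ∘ γ) (f' (γ t) (y - x)) (Set.Icc 0 1) t := fun t ht ↦
    (hf (γ t) (hγ ht)).comp_hasDerivWithinAt t AffineMap.hasDerivWithinAt_lineMap hγ
  have hbound : ∀ t ∈ Set.Ico (0 : ℝ) 1,
      f' (γ t) (y - x) ≤ f' x (y - x) + L * ‖y - x‖ ^ 2 * (t - 0) := fun t ht ↦ by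
    have hdist : ‖γ t - x‖ = t * ‖y - x‖ := by
      simp [γ, AffineMap.lineMap_apply, norm_smul, abs_of_nonneg ht.1]
    suffices (f' (γ t) - f' x) (y - x) ≤ L * ‖y - x‖ ^ 2 * t by
      rw [sub_apply] at this
      linarith
    calc (f' (γ t) - f' x) (y - x)
      _ ≤ ‖f' (γ t) - f' x‖ * ‖y - x‖ :=
        (le_abs_self _).trans ((f' (γ t) - f' x).le_opNorm (y - x))
      _ ≤ L * (t * ‖y - x‖) * ‖y - x‖ := by
        gcongr
        exact hdist ▸ hlip (γ t) (hγ (Set.Ico_subset_Icc_self ht))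
      _ = L * ‖y - x‖ ^ 2 * t := by ring
  have hmodel := le_quadratic_of_deriv_right_le_affine zero_le_one
    (fun t ht ↦ (hderiv t ht).continuousWithinAt)
    (fun t ht ↦ (hderiv t (Set.Ico_subset_Icc_self ht)).mono_of_mem_nhdsWithin
      (Icc_mem_nhdsGE_of_mem ht)) hbound
  simp only [Function.comp_apply, γ, AffineMap.lineMap_apply_zero,
    AffineMap.lineMap_apply_one] at hmodel
  linarith

theorem frank_wolfe_step_nonconvex_general {Q : E → ℝ} {Q' : E → StrongDual ℝ E}
    {x s v : E} {d : StrongDual ℝ E} {L D η : ℝ} (hL : 0 ≤ L) (hη : 0 ≤ η)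
    (hQ : ∀ z ∈ segment ℝ x ((1 - η) • x + η • s),
      HasFDerivWithinAt Q (Q' z) (segment ℝ x ((1 - η) • x + η • s)) z)
    (hlip : ∀ z ∈ segment ℝ x ((1 - η) • x + η • s), ‖Q' z - Q' x‖ ≤ L * ‖z - x‖)
    (hsx : ‖s - x‖ ≤ D) (hvx : ‖v - x‖ ≤ D) (hlin : d s ≤ d v) :
    Q ((1 - η) • x + η • s) ≤
      Q x - η * (-Q' x) (v - x) + 2 * η * D * ‖d - Q' x‖ + L / 2 * η ^ 2 * D ^ 2 := by
  have hstep : (1 - η) • x + η • s - x = η • (s - x) := by module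
  have hsv : ‖s - v‖ ≤ 2 * D := by
    linarith [norm_sub_le_norm_sub_add_norm_sub s x v, norm_sub_rev x v]
  calc Q ((1 - η) • x + η • s)
    _ ≤ Q x + η * Q' x (s - x) + L / 2 * (η * ‖s - x‖) ^ 2 := by
      simpa [hstep, norm_smul, abs_of_nonneg hη] using
        le_add_fderiv_add_sq_of_norm_fderiv_sub_le hQ hlip
    _ ≤ Q x + η * (Q' x (v - x) + ‖d - Q' x‖ * (2 * D)) + L / 2 * (η * D) ^ 2 := by
      have hQs : Q' x s ≤ Q' x v + ‖d - Q' x‖ * (2 * D) :=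
        (apply_le_apply_add_norm_sub_mul_norm_sub hlin).trans (by gcongr)
      gcongr
      rw [map_sub, map_sub]
      linarith
    _ = Q x - η * (-Q' x) (v - x) + 2 * η * D * ‖d - Q' x‖ + L / 2 * η ^ 2 * D ^ 2 := by
      rw [neg_apply]
      ring

end NormedSpace

/-- Per-iteration inequality for the Frank–Wolfe update with an inexact gradient
direction, non-convex case (driving the non-convex rates of Theorems 1 and 2). -/
theorem frank_wolfe_step_nonconvex
    {H : Type*} [NormedAddCommGroup H] [InnerProductSpace ℝ H] [CompleteSpace H]
    (Q : H → ℝ) (L : ℝ) (hL : 0 ≤ L)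
    (hdiff : Differentiable ℝ Q)
    (hlip : ∀ u v : H, ‖gradient Q u - gradient Q v‖ ≤ L * ‖u - v‖)
    (x s vhat d : H) (D η : ℝ) (hD : 0 ≤ D) (hη0 : 0 ≤ η) (hη1 : η ≤ 1)
    (hsx : ‖s - x‖ ≤ D) (hvx : ‖vhat - x‖ ≤ D)
    (hlin : ⟪s, d⟫ ≤ ⟪vhat, d⟫) :
    Q ((1 - η) • x + η • s) ≤
      Q x - η * ⟪vhat - x, -gradient Q x⟫
        + 2 * η * D * ‖d - gradient Q x‖ + (L / 2) * η ^ 2 * D ^ 2 := by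
  have h := frank_wolfe_step_nonconvex_general (d := InnerProductSpace.toDual ℝ H d)
    (Q' := fun z ↦ InnerProductSpace.toDual ℝ H (gradient Q z)) hL hη0
    (fun z _ ↦ (hdiff z).hasGradientAt.hasFDerivAt.hasFDerivWithinAt)
    (fun z _ ↦ by simpa only [← map_sub, LinearIsometryEquiv.norm_map] using hlip z x)
    hsx hvx (by simpa only [InnerProductSpace.toDual_apply_apply, real_inner_comm] using hlin)
  simpa only [← map_sub, ← map_neg, LinearIsometryEquiv.norm_map,
    InnerProductSpace.toDual_apply_apply, real_inner_comm] using h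
end

section
/- Let T ≥ 1 be an integer, let D, L, E0, Δ be nonnegative reals, and set η = 2/(T+1)^{2/3}. Let g, e : ℕ → ℝ be such that e(t) ≤ E0/(t+1)^{1/3} for all 1 ≤ t ≤ T, and suppose η·∑_{t=1}^{T} g(t) ≤ Δ + 2·D·η·∑_{t=1}^{T} e(t) + (L·D²/2)·T·η². Then (1/T)·∑_{t=1}^{T} g(t) ≤ Δ/(T+1)^{1/3} + (6·D·E0)/(T+1)^{1/3} + L·D²/(T+1)^{2/3}. -/
open Real Finset

/-! Dividing the descent inequality by `η T` bounds the average gap by `Δ / (η T)`, plus `2 D` times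
the average of `e`, plus `(L D² / 2) η`. With `η` of order `(T + 1)^(p - 1)` and `e t` of order
`(t + 1)^(-p)`, the first two terms are both of order `(T + 1)^(-p)`: the first because
`T + 1 ≤ 2 T`, the second because comparison with `∫ u^(-p)` bounds `∑ (t + 1)^(-p)` by
`(T + 1)^(1 - p) / (1 - p)`. The theorem is the case `p = 1/3`, `η = 2 / (T + 1)^(2/3)`. -/

theorem sum_Icc_add_rpow_neg_le {p x : ℝ} (hp : 0 ≤ p) (hp_ne : p ≠ 1) (hx : 0 < x) (n : ℕ) :
    ∑ t ∈ Icc 1 n, ((t : ℝ) + x) ^ (-p) ≤ ((n + x) ^ (1 - p) - x ^ (1 - p)) / (1 - p) := by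
  have antitone : AntitoneOn (fun u : ℝ ↦ u ^ (-p)) (Set.Icc x (x + n)) :=
    (antitoneOn_rpow_Ioi_of_exponent_nonpos (neg_nonpos.2 hp)).mono
      fun _ hu ↦ hx.trans_le hu.1
  have zero_notMem : (0 : ℝ) ∉ Set.uIcc x (x + n) := by
    rw [Set.uIcc_of_le (by simp)]
    exact fun h ↦ hx.not_ge h.1
  calc ∑ t ∈ Icc 1 n, ((t : ℝ) + x) ^ (-p)
      = ∑ i ∈ range n, (x + (i + 1 : ℕ)) ^ (-p) := by
        rw [range_eq_Ico, sum_Ico_add' (fun t : ℕ ↦ (x + t) ^ (-p)) 0 n 1]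
        simp only [zero_add, Ico_add_one_right_eq_Icc, add_comm x]
    _ ≤ ∫ u in x..x + n, u ^ (-p) := antitone.sum_le_integral
    _ = ((n + x) ^ (1 - p) - x ^ (1 - p)) / (1 - p) := by
        rw [integral_rpow (.inr ⟨fun h ↦ hp_ne (neg_injective h), zero_notMem⟩),
          neg_add_eq_sub, add_comm x]

theorem add_one_rpow_one_sub_div_le {x : ℝ} (hx : 1 ≤ x) (p : ℝ) :
    (x + 1) ^ (1 - p) / x ≤ 2 / (x + 1) ^ p := by
  have x_pos : 0 < x := by linarith
  rw [rpow_sub (by positivity), rpow_one, div_right_comm]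
  gcongr
  rw [div_le_iff₀ x_pos]
  linarith

theorem average_le_of_le_div_add_one_rpow {T : ℕ} (hT : 1 ≤ T) {p E₀ : ℝ} (hp : 0 ≤ p)
    (hp_lt : p < 1) (hE₀ : 0 ≤ E₀) {e : ℕ → ℝ}
    (he : ∀ t : ℕ, 1 ≤ t → t ≤ T → e t ≤ E₀ / ((t : ℝ) + 1) ^ p) :
    1 / (T : ℝ) * ∑ t ∈ Icc 1 T, e t ≤ 2 / (1 - p) * E₀ / ((T : ℝ) + 1) ^ p := by
  have : 0 < 1 - p := sub_pos.2 hp_lt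
  have sum_le : ∑ t ∈ Icc 1 T, e t ≤ E₀ * (((T : ℝ) + 1) ^ (1 - p) / (1 - p)) :=
    calc ∑ t ∈ Icc 1 T, e t
        ≤ ∑ t ∈ Icc 1 T, E₀ * ((t : ℝ) + 1) ^ (-p) := by
          refine sum_le_sum fun t ht ↦ ?_
          rw [rpow_neg (by positivity), ← div_eq_mul_inv]
          exact he t (mem_Icc.1 ht).1 (mem_Icc.1 ht).2
      _ = E₀ * ∑ t ∈ Icc 1 T, ((t : ℝ) + 1) ^ (-p) := (mul_sum ..).symm
      _ ≤ E₀ * (((T : ℝ) + 1) ^ (1 - p) / (1 - p)) := by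
          gcongr
          refine (sum_Icc_add_rpow_neg_le hp hp_lt.ne one_pos T).trans ?_
          gcongr
          simp
  calc 1 / (T : ℝ) * ∑ t ∈ Icc 1 T, e t
      ≤ 1 / (T : ℝ) * (E₀ * (((T : ℝ) + 1) ^ (1 - p) / (1 - p))) := by gcongr
    _ = E₀ / (1 - p) * (((T : ℝ) + 1) ^ (1 - p) / T) := by ring
    _ ≤ E₀ / (1 - p) * (2 / ((T : ℝ) + 1) ^ p) :=
        mul_le_mul_of_nonneg_left (add_one_rpow_one_sub_div_le (Nat.one_le_cast.2 hT) p)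
          (by positivity)
    _ = 2 / (1 - p) * E₀ / ((T : ℝ) + 1) ^ p := by ring

theorem one_div_mul_le_of_mul_le_add {K : Type*} [Field K] [LinearOrder K] [IsStrictOrderedRing K]
    {n η G Δ a E b : K} (hn : 0 < n) (hη : 0 < η)
    (h : η * G ≤ Δ + a * η * E + b * n * η ^ 2) :
    1 / n * G ≤ Δ / (η * n) + a * (1 / n * E) + b * η := by
  refine le_of_mul_le_mul_left ?_ (mul_pos hη hn)
  calc η * n * (1 / n * G) = η * G := by field_simp
    _ ≤ Δ + a * η * E + b * n * η ^ 2 := h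
    _ = η * n * (Δ / (η * n) + a * (1 / n * E) + b * η) := by field_simp

theorem scfw_nonconvex_averaging_general {T : ℕ} (hT : 1 ≤ T) {p c D L E₀ Δ η : ℝ}
    (hp : 0 ≤ p) (hp_lt : p < 1) (hc : 0 < c) (hD : 0 ≤ D) (hE₀ : 0 ≤ E₀) (hΔ : 0 ≤ Δ)
    (hη : η = c / ((T : ℝ) + 1) ^ (1 - p)) {g e : ℕ → ℝ}
    (he : ∀ t : ℕ, 1 ≤ t → t ≤ T → e t ≤ E₀ / ((t : ℝ) + 1) ^ p)
    (hsum : η * ∑ t ∈ Icc 1 T, g t ≤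
      Δ + 2 * D * η * ∑ t ∈ Icc 1 T, e t + (L * D ^ 2 / 2) * (T : ℝ) * η ^ 2) :
    1 / (T : ℝ) * ∑ t ∈ Icc 1 T, g t ≤
      2 / c * Δ / ((T : ℝ) + 1) ^ p
        + 4 / (1 - p) * D * E₀ / ((T : ℝ) + 1) ^ p
        + c / 2 * (L * D ^ 2) / ((T : ℝ) + 1) ^ (1 - p) := by
  have T_pos : (0 : ℝ) < T := mod_cast hT
  have η_pos : 0 < η := hη ▸ by positivity
  have initial_le : Δ / (η * T) ≤ 2 / c * Δ / ((T : ℝ) + 1) ^ p :=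
    calc Δ / (η * T) = Δ / c * (((T : ℝ) + 1) ^ (1 - p) / T) := by rw [hη]; field_simp
      _ ≤ Δ / c * (2 / ((T : ℝ) + 1) ^ p) :=
          mul_le_mul_of_nonneg_left (add_one_rpow_one_sub_div_le (Nat.one_le_cast.2 hT) p)
            (by positivity)
      _ = 2 / c * Δ / ((T : ℝ) + 1) ^ p := by ring
  calc 1 / (T : ℝ) * ∑ t ∈ Icc 1 T, g t
      ≤ Δ / (η * T) + 2 * D * (1 / T * ∑ t ∈ Icc 1 T, e t) + L * D ^ 2 / 2 * η :=
        one_div_mul_le_of_mul_le_add T_pos η_pos hsum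
    _ ≤ 2 / c * Δ / ((T : ℝ) + 1) ^ p + 2 * D * (2 / (1 - p) * E₀ / ((T : ℝ) + 1) ^ p)
          + L * D ^ 2 / 2 * η := by
        gcongr
        exact average_le_of_le_div_add_one_rpow hT hp hp_lt hE₀ he
    _ = _ := by rw [hη]; ring

/-- Deterministic averaging step of the non-convex case of Theorem 2 (SCFW):
yields the O(T^{-1/3}) rate for the expected Frank–Wolfe gap. -/
theorem scfw_nonconvex_averaging
    (T : ℕ) (hT : 1 ≤ T) (D L E0 Δ : ℝ)
    (hD : 0 ≤ D) (hL : 0 ≤ L) (hE0 : 0 ≤ E0) (hΔ : 0 ≤ Δ)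
    (η : ℝ) (hη : η = 2 / ((T : ℝ) + 1) ^ ((2 : ℝ) / 3))
    (g e : ℕ → ℝ)
    (he : ∀ t : ℕ, 1 ≤ t → t ≤ T → e t ≤ E0 / ((t : ℝ) + 1) ^ ((1 : ℝ) / 3))
    (hsum : η * ∑ t ∈ Finset.Icc 1 T, g t ≤
      Δ + 2 * D * η * ∑ t ∈ Finset.Icc 1 T, e t
        + (L * D ^ 2 / 2) * (T : ℝ) * η ^ 2) :
    (1 / (T : ℝ)) * ∑ t ∈ Finset.Icc 1 T, g t ≤
      Δ / ((T : ℝ) + 1) ^ ((1 : ℝ) / 3)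
        + (6 * D * E0) / ((T : ℝ) + 1) ^ ((1 : ℝ) / 3)
        + L * D ^ 2 / ((T : ℝ) + 1) ^ ((2 : ℝ) / 3) := by
  have one_sub_third : (1 : ℝ) - 1 / 3 = 2 / 3 := by norm_num
  refine (scfw_nonconvex_averaging_general hT (p := 1 / 3) (c := 2) (by norm_num) (by norm_num)
    two_pos hD hE0 hΔ (one_sub_third ▸ hη) he hsum).trans_eq ?_
  rw [one_sub_third]
  ring
end

section
/- Let H1 be a real normed space and H2 a real Hilbert space, let μ > 0 and C ≥ 0, and let g : H1 × H2 → ℝ be such that for every x ∈ H1 the map y ↦ g(x, y) is differentiable and μ-strongly convex on H2, and the partial gradient satisfies ‖∇_y g(x1, y) − ∇_y g(x2, y)‖ ≤ C·‖x1 − x2‖ for all x1, x2 ∈ H1 and y ∈ H2. If y1* is a global minimizer of y ↦ g(x1, y) and y2* is a global minimizer of y ↦ g(x2, y), then ‖y1* − y2*‖ ≤ (C/μ)·‖x1 − x2‖. -/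
/-!
A strongly convex function has a strongly monotone derivative, so its derivative spreads points
apart: `μ * ‖y - z‖ ≤ ‖f' y - f' z‖`. Apply this to `g (x1, ·)` at the two minimizers. The
derivative at `y1` vanishes, and the one at `y2` is at most `C * ‖x1 - x2‖`, because `g (x2, ·)`
has zero derivative there.
-/

open scoped RealInnerProductSpace

section NormedSpace

variable {E : Type*} [NormedAddCommGroup E] [NormedSpace ℝ E]
  {μ : ℝ} {f f₁ f₂ : E → ℝ} {f' f₁' f₂' : E → E →L[ℝ] ℝ} {y z : E}

/-- Strong convexity with modulus `μ`, in its first-order form: `f` lies above each of its affine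
models `z ↦ f y + f' y (z - y)` by at least `μ / 2 * ‖z - y‖ ^ 2`. The field `f'` plays the role of
the derivative of `f`, but the definition does not ask for differentiability. -/
def FirstOrderStrongConvex (μ : ℝ) (f : E → ℝ) (f' : E → E →L[ℝ] ℝ) : Prop :=
  ∀ y z, f y + f' y (z - y) + μ / 2 * ‖z - y‖ ^ 2 ≤ f z

namespace FirstOrderStrongConvex

theorem mul_norm_sub_sq_le (hf : FirstOrderStrongConvex μ f f') (y z : E) :
    μ * ‖y - z‖ ^ 2 ≤ (f' y - f' z) (y - z) := by
  have hyz := hf y z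
  have hzy := hf z y
  rw [← neg_sub y z, map_neg, norm_neg] at hyz
  rw [sub_apply]
  linarith

theorem mul_norm_sub_le (hf : FirstOrderStrongConvex μ f f') (y z : E) :
    μ * ‖y - z‖ ≤ ‖f' y - f' z‖ := by
  rcases (norm_nonneg (y - z)).eq_or_lt with hzero | hpos
  · simp [← hzero]
  · refine le_of_mul_le_mul_right ?_ hpos
    calc
      μ * ‖y - z‖ * ‖y - z‖ = μ * ‖y - z‖ ^ 2 := by ring
      _ ≤ (f' y - f' z) (y - z) := hf.mul_norm_sub_sq_le y z
      _ ≤ ‖f' y - f' z‖ * ‖y - z‖ := (le_abs_self _).trans ((f' y - f' z).le_opNorm (y - z))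

theorem mul_norm_sub_le_of_isLocalMin (hf₁ : FirstOrderStrongConvex μ f₁ f₁')
    (hy : IsLocalMin f₁ y) (hz : IsLocalMin f₂ z)
    (hf₁' : HasFDerivAt f₁ (f₁' y) y) (hf₂' : HasFDerivAt f₂ (f₂' z) z) :
    μ * ‖y - z‖ ≤ ‖f₁' z - f₂' z‖ := by
  have hy_zero : f₁' y = 0 := hy.hasFDerivAt_eq_zero hf₁'
  have hz_zero : f₂' z = 0 := hz.hasFDerivAt_eq_zero hf₂'
  calc
    μ * ‖y - z‖ ≤ ‖f₁' y - f₁' z‖ := hf₁.mul_norm_sub_le y z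
    _ = ‖f₁' z - f₂' z‖ := by rw [hy_zero, hz_zero, zero_sub, norm_neg, sub_zero]

end FirstOrderStrongConvex

theorem inner_minimizer_lipschitz_general {X : Type*} [PseudoMetricSpace X] {C : ℝ} (hμ : 0 < μ)
    {g : X → E → ℝ} {g' : X → E → E →L[ℝ] ℝ}
    (hderiv : ∀ x y, HasFDerivAt (g x) (g' x y) y)
    (hconvex : ∀ x, FirstOrderStrongConvex μ (g x) (g' x))
    (hlip : ∀ x₁ x₂ y, ‖g' x₁ y - g' x₂ y‖ ≤ C * dist x₁ x₂)
    {x₁ x₂ : X} {y₁ y₂ : E} (hy₁ : IsLocalMin (g x₁) y₁) (hy₂ : IsLocalMin (g x₂) y₂) :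
    ‖y₁ - y₂‖ ≤ C / μ * dist x₁ x₂ := by
  rw [div_mul_eq_mul_div, le_div_iff₀' hμ]
  calc
    μ * ‖y₁ - y₂‖ ≤ ‖g' x₁ y₂ - g' x₂ y₂‖ :=
      (hconvex x₁).mul_norm_sub_le_of_isLocalMin hy₁ hy₂ (hderiv x₁ y₁) (hderiv x₂ y₂)
    _ ≤ C * dist x₁ x₂ := hlip x₁ x₂ y₂

end NormedSpace

/-- Lipschitz continuity of the inner minimizer map (Lemma 4(b) of the paper). -/
theorem inner_minimizer_lipschitz
    {H1 : Type*} [NormedAddCommGroup H1] [NormedSpace ℝ H1]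
    {H2 : Type*} [NormedAddCommGroup H2] [InnerProductSpace ℝ H2] [CompleteSpace H2]
    (μ C : ℝ) (hμ : 0 < μ) (hC : 0 ≤ C)
    (g : H1 × H2 → ℝ)
    (hdiff : ∀ x : H1, Differentiable ℝ (fun y : H2 => g (x, y)))
    (hsc : ∀ (x : H1) (y z : H2),
      g (x, z) ≥ g (x, y) + ⟪gradient (fun y' : H2 => g (x, y')) y, z - y⟫
        + (μ / 2) * ‖z - y‖ ^ 2)
    (hlip : ∀ (x1 x2 : H1) (y : H2),
      ‖gradient (fun y' : H2 => g (x1, y')) y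
        - gradient (fun y' : H2 => g (x2, y')) y‖ ≤ C * ‖x1 - x2‖)
    (x1 x2 : H1) (y1 y2 : H2)
    (hy1 : ∀ z : H2, g (x1, y1) ≤ g (x1, z))
    (hy2 : ∀ z : H2, g (x2, y2) ≤ g (x2, z)) :
    ‖y1 - y2‖ ≤ (C / μ) * ‖x1 - x2‖ := by
  have hlip_dual (x x' : H1) (y : H2) :
      ‖InnerProductSpace.toDual ℝ H2 (gradient (fun y' => g (x, y')) y)
        - InnerProductSpace.toDual ℝ H2 (gradient (fun y' => g (x', y')) y)‖ ≤ C * dist x x' := by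
    rw [← map_sub, LinearIsometryEquiv.norm_map, dist_eq_norm]
    exact hlip x x' y
  rw [← dist_eq_norm x1 x2]
  exact inner_minimizer_lipschitz_general hμ (fun x y => (hdiff x y).hasGradientAt.hasFDerivAt)
    hsc hlip_dual (.of_forall hy1) (.of_forall hy2)
end
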